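/- arXiv:2012.04428 — 2 statements merged into one kernel-verified Lean document; each statement's English description precedes it below -/
import Mathlib

section
/- Fix N' ≥ 2. Suppose histograms γ_{n,n''} are given for all 1 ≤ n'' < N' and 0 ≤ n ≤ n'' (with the convention γ_{n,n''} := γ_{n'',n''} for n > n'') and satisfy the bound condition for every such n''. Define γ_{0,N'} := e^0 and γ_{n,N'} := γ_{n−1,N'−1} + dm(γ_{min(n,N'−1),N'−1}) for 1 ≤ n ≤ N'. Then γ_{·,N'} also satisfies the bound condition: (a) for every 1 ≤ n ≤ N' and every h ∈ RL(n, N'), H_a(h) ≼ γ_{n,N'}; and (b) n ≤ ñ ≤ N' implies γ_{n,N'} ≼ γ_{ñ,N'}. -/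
open scoped Classical

noncomputable section

/-- Tail sum `Σ_{j ≥ J} v j` of a finitely supported histogram `v : ℕ →₀ ℕ`. -/
def tailSum (v : ℕ →₀ ℕ) (J : ℕ) : ℕ :=
  ∑ j ∈ v.support.filter (fun j => J ≤ j), v j

/-- Order relation on histograms: `v ≼ w` iff every tail sum of `v` is at most that of `w`. -/
def HistLE (v w : ℕ →₀ ℕ) : Prop :=
  ∀ J : ℕ, tailSum v J ≤ tailSum w J

/-- Downward move: `dm v 0 = 0` and `dm v (i+1) = v i`. -/
def dm (v : ℕ →₀ ℕ) : ℕ →₀ ℕ :=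
  Finsupp.embDomain ⟨Nat.succ, Nat.succ_injective⟩ v

/-- Clipping `cl_k`: keeps values below `k`, puts the tail sum at `k`, zero above `k`. -/
def clip (k : ℕ) (v : ℕ →₀ ℕ) : ℕ →₀ ℕ :=
  Finsupp.onFinset (Finset.range (k + 1))
    (fun i => if i < k then v i else if i = k then tailSum v k else 0)
    (by
      intro a ha
      simp only [Finset.mem_range]
      by_contra hc
      push_neg at hc
      have h1 : ¬ a < k := by omega
      have h2 : a ≠ k := by omega
      simp [h1, h2] at ha)

/-- Activation pattern of a ReLU layer `h ∈ RL(n, n')` given by `W, b`. -/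
def layerPattern {n n' : ℕ} (W : Matrix (Fin n') (Fin n) ℝ) (b : Fin n' → ℝ)
    (x : Fin n → ℝ) : Fin n' → Bool :=
  fun j => decide (0 < W.mulVec x j + b j)

/-- `|s|₁`, the number of ones in a `Bool`-valued pattern. -/
def bweight {m : ℕ} (s : Fin m → Bool) : ℕ :=
  (Finset.univ.filter (fun j => s j = true)).card

/-- Activation histogram of a ReLU layer: `i ↦ #{achievable patterns s with |s|₁ = i}`. -/
def actHist {n n' : ℕ} (W : Matrix (Fin n') (Fin n) ℝ) (b : Fin n' → ℝ) : ℕ →₀ ℕ :=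
  Finsupp.onFinset (Finset.range (n' + 1))
    (fun i => (Finset.univ.filter (fun s : Fin n' → Bool =>
        (∃ x, layerPattern W b x = s) ∧ bweight s = i)).card)
    (by
      intro a ha
      simp only [Finset.mem_range]
      by_contra hc
      push_neg at hc
      apply ha
      rw [Finset.card_eq_zero, Finset.filter_eq_empty_iff]
      intro s _
      rintro ⟨-, rfl⟩
      have hle : bweight s ≤ n' :=
        le_trans (Finset.card_filter_le _ _) (by simp)
      omega)

/-!
Split off the first neuron. A pattern of the remaining neurons extends to at most two patterns of
the layer, so the layer has as many patterns as there are tails, plus one for every tail that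
extends in both ways. In the second case the first pre-activation changes sign on the convex
region of that tail, hence vanishes somewhere on it, and the tail is already a pattern of the
remaining neurons restricted to a hyperplane. Counting each such tail with its extension by `0`
and every tail once more with its weight lowered by at most `1` gives the two summands of the
recursion.
-/

section Histograms

variable {u v w v' w' : ℕ →₀ ℕ}

theorem tailSum_eq_sum_ite (v : ℕ →₀ ℕ) (J : ℕ) :
    tailSum v J = v.sum fun j c => if J ≤ j then c else 0 :=
  Finset.sum_filter _ _

theorem tailSum_add (v w : ℕ →₀ ℕ) (J : ℕ) :
    tailSum (v + w) J = tailSum v J + tailSum w J := by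
  simp only [tailSum_eq_sum_ite]
  exact Finsupp.sum_add_index' (fun _ => ite_self 0) fun _ _ _ => by split_ifs <;> rfl

/-- At `J = 0` the subtraction truncates, and both sides are the total mass. -/
theorem tailSum_dm (v : ℕ →₀ ℕ) (J : ℕ) : tailSum (dm v) J = tailSum v (J - 1) := by
  simp only [tailSum_eq_sum_ite, dm, Finsupp.sum_embDomain, Function.Embedding.coeFn_mk,
    Nat.succ_eq_add_one, Nat.sub_le_iff_le_add]

theorem tailSum_single_zero (c J : ℕ) :
    tailSum (Finsupp.single 0 c) J = if J = 0 then c else 0 := by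
  rw [tailSum_eq_sum_ite, Finsupp.sum_single_index (by exact ite_self 0)]
  simp only [Nat.le_zero]

theorem HistLE.refl (v : ℕ →₀ ℕ) : HistLE v v :=
  fun _ => le_rfl

theorem HistLE.trans (huv : HistLE u v) (hvw : HistLE v w) : HistLE u w :=
  fun J => (huv J).trans (hvw J)

theorem HistLE.add (h : HistLE v w) (h' : HistLE v' w') : HistLE (v + v') (w + w') := fun J => by
  simpa only [tailSum_add] using Nat.add_le_add (h J) (h' J)

theorem HistLE.dm (h : HistLE v w) : HistLE (dm v) (dm w) := fun J => by
  simpa only [tailSum_dm] using h (J - 1)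

end Histograms

section Patterns

variable {m : ℕ}

theorem bweight_le (s : Fin m → Bool) : bweight s ≤ m :=
  (Finset.card_filter_le _ _).trans_eq (Finset.card_fin m)

theorem bweight_cons (c : Bool) (t : Fin m → Bool) :
    bweight (Fin.cons c t : Fin (m + 1) → Bool) = c.toNat + bweight t := by
  simp only [bweight, Finset.card_filter, Fin.sum_univ_succ, Fin.cons_zero, Fin.cons_succ]
  cases c <;> rfl

/-- The tails `t` whose extension by the first entry `c` lies in `A`. -/
def consFiber {α : Type*} [Fintype α] (c : α) (A : Finset (Fin (m + 1) → α)) :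
    Finset (Fin m → α) :=
  {t | Fin.cons c t ∈ A}

theorem mem_consFiber {α : Type*} [Fintype α] {c : α} {A : Finset (Fin (m + 1) → α)}
    {t : Fin m → α} : t ∈ consFiber c A ↔ Fin.cons c t ∈ A := by
  simp only [consFiber, Finset.mem_filter, Finset.mem_univ, true_and]

theorem sum_card_consFiber {α : Type*} [Fintype α] (A : Finset (Fin (m + 1) → α)) :
    ∑ c, (consFiber c A).card = A.card := by
  calc ∑ c, (consFiber c A).card
      = ∑ p : α × (Fin m → α), if Fin.cons p.1 p.2 ∈ A then 1 else 0 := by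
        simp only [consFiber, Finset.card_filter, Fintype.sum_prod_type]
    _ = ∑ s, if s ∈ A then 1 else 0 :=
        (Fin.consEquiv fun _ => α).sum_comp fun s => if s ∈ A then 1 else 0
    _ = A.card := by
        rw [← Finset.card_filter, Finset.filter_univ_mem]

theorem card_eq_card_inter_add_card_union_consFiber (A : Finset (Fin (m + 1) → Bool)) :
    A.card = (consFiber true A ∩ consFiber false A).card +
      (consFiber true A ∪ consFiber false A).card := by
  rw [Finset.card_inter_add_card_union, ← sum_card_consFiber A, Fintype.sum_bool]

theorem card_filter_le_bweight_le {A : Finset (Fin (m + 1) → Bool)} {P Q : Finset (Fin m → Bool)}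
    (hP : ∀ t, Fin.cons true t ∈ A → Fin.cons false t ∈ A → t ∈ P)
    (hQ : ∀ c t, Fin.cons c t ∈ A → t ∈ Q) (J : ℕ) :
    (A.filter (J ≤ bweight ·)).card ≤
      (P.filter (J ≤ bweight ·)).card + (Q.filter (J - 1 ≤ bweight ·)).card := by
  have mem_Q (c : Bool) {t : Fin m → Bool}
      (ht : t ∈ consFiber c (A.filter (J ≤ bweight ·))) : t ∈ Q.filter (J - 1 ≤ bweight ·) := by
    rw [mem_consFiber, Finset.mem_filter, bweight_cons] at ht
    have hc := c.toNat_le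
    exact Finset.mem_filter.2 ⟨hQ c t ht.1, by lia⟩
  rw [card_eq_card_inter_add_card_union_consFiber]
  refine Nat.add_le_add (Finset.card_le_card fun t ht => ?_)
    (Finset.card_le_card (Finset.union_subset (fun _ => mem_Q true) fun _ => mem_Q false))
  simp only [Finset.mem_inter, mem_consFiber, Finset.mem_filter, bweight_cons] at ht
  obtain ⟨⟨h_true, -⟩, h_false, hJ⟩ := ht
  exact Finset.mem_filter.2 ⟨hP t h_true h_false, by simpa using hJ⟩

end Patterns

section Layers

variable {n n' m : ℕ}

/-- The set `S(h)` of activation patterns achieved by the layer `h` with weights `W` and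
biases `b`. -/
def activationPatterns (W : Matrix (Fin m) (Fin n) ℝ) (b : Fin m → ℝ) : Finset (Fin m → Bool) :=
  {s | ∃ x, layerPattern W b x = s}

theorem mem_activationPatterns {W : Matrix (Fin m) (Fin n) ℝ} {b : Fin m → ℝ}
    {s : Fin m → Bool} : s ∈ activationPatterns W b ↔ ∃ x, layerPattern W b x = s := by
  simp only [activationPatterns, Finset.mem_filter, Finset.mem_univ, true_and]

theorem tailSum_actHist (W : Matrix (Fin m) (Fin n) ℝ) (b : Fin m → ℝ) (J : ℕ) :
    tailSum (actHist W b) J = ((activationPatterns W b).filter (J ≤ bweight ·)).card := by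
  have maps_to : ∀ s ∈ (activationPatterns W b).filter (J ≤ bweight ·),
      bweight s ∈ Finset.range (m + 1) :=
    fun s _ => Finset.mem_range_succ_iff.2 (bweight_le s)
  rw [tailSum_eq_sum_ite, actHist, Finsupp.onFinset_sum _ fun _ => by exact ite_self 0,
    Finset.card_eq_sum_card_fiberwise maps_to]
  refine Finset.sum_congr rfl fun i _ => ?_
  rw [activationPatterns, Finset.filter_filter, Finset.filter_filter]
  split_ifs with hJ
  · exact congrArg Finset.card (Finset.filter_congr fun s _ => by grind)
  · exact (Finset.card_eq_zero.2 (Finset.filter_eq_empty_iff.2 fun s _ => by grind)).symm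

theorem actHist_histLE_of_patterns_subset {W : Matrix (Fin m) (Fin n) ℝ} {b : Fin m → ℝ}
    {W' : Matrix (Fin m) (Fin n') ℝ} {b' : Fin m → ℝ}
    (h : activationPatterns W b ⊆ activationPatterns W' b') :
    HistLE (actHist W b) (actHist W' b') := fun J => by
  simpa only [tailSum_actHist] using Finset.card_le_card (Finset.filter_subset_filter _ h)

theorem activationPatterns_subset_one (W : Matrix (Fin m) (Fin n) ℝ) (b : Fin m → ℝ) :
    activationPatterns W b ⊆ activationPatterns (1 : Matrix (Fin m) (Fin m) ℝ) b := fun s hs => by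
  obtain ⟨x, rfl⟩ := mem_activationPatterns.1 hs
  exact mem_activationPatterns.2 ⟨W.mulVec x, by unfold layerPattern; rw [Matrix.one_mulVec]⟩

theorem single_zero_one_histLE_actHist (W : Matrix (Fin m) (Fin n) ℝ) (b : Fin m → ℝ) :
    HistLE (Finsupp.single 0 1) (actHist W b) := fun J => by
  rw [tailSum_single_zero, tailSum_actHist]
  split_ifs with hJ
  · exact Finset.card_pos.2 ⟨layerPattern W b 0,
      Finset.mem_filter.2 ⟨mem_activationPatterns.2 ⟨0, rfl⟩, hJ ▸ Nat.zero_le _⟩⟩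
  · exact Nat.zero_le _

theorem convex_setOf_layerPattern_eq (W : Matrix (Fin m) (Fin n) ℝ) (b : Fin m → ℝ)
    (s : Fin m → Bool) : Convex ℝ {x | layerPattern W b x = s} := by
  have isLinearMap (j : Fin m) : IsLinearMap ℝ fun x => W.mulVec x j :=
    (LinearMap.proj j ∘ₗ W.mulVecLin).isLinear
  simp only [funext_iff, Set.ofPred_forall]
  refine convex_iInter fun j => ?_
  cases s j
  · simpa only [layerPattern, decide_eq_false_iff_not, not_lt, ← le_neg_iff_add_nonpos_right]
      using convex_halfSpace_le (isLinearMap j) (-b j)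
  · simpa only [layerPattern, decide_eq_true_eq, ← neg_lt_iff_pos_add]
      using convex_halfSpace_gt (isLinearMap j) (-b j)

theorem exists_preactivation_eq_zero {W : Matrix (Fin m) (Fin n) ℝ} {b : Fin m → ℝ}
    {s : Fin m → Bool} {w : Fin n → ℝ} {β : ℝ} {x y : Fin n → ℝ}
    (hx : layerPattern W b x = s) (hy : layerPattern W b y = s)
    (hwx : w ⬝ᵥ x + β ≤ 0) (hwy : 0 ≤ w ⬝ᵥ y + β) :
    ∃ z, layerPattern W b z = s ∧ w ⬝ᵥ z + β = 0 :=
  (convex_setOf_layerPattern_eq W b s).isPreconnected.intermediate_value hx hy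
    (f := fun z => w ⬝ᵥ z + β) (by fun_prop) ⟨hwx, hwy⟩

theorem layerPattern_mulVec_add (W : Matrix (Fin m) (Fin n') ℝ) (b : Fin m → ℝ)
    (A : Matrix (Fin n') (Fin n) ℝ) (a : Fin n' → ℝ) (y : Fin n → ℝ) :
    layerPattern W b (A.mulVec y + a) = layerPattern (W * A) (W.mulVec a + b) y := by
  funext j
  simp only [layerPattern, Matrix.mulVec_add, Matrix.mulVec_mulVec, Pi.add_apply, add_assoc]

theorem exists_parametrization_of_hyperplane {K : Type*} [Field K] {w : Fin (n + 1) → K}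
    (hw : w ≠ 0) (β : K) :
    ∃ (A : Matrix (Fin (n + 1)) (Fin n) K) (a : Fin (n + 1) → K),
      ∀ z, w ⬝ᵥ z + β = 0 → ∃ y, A.mulVec y + a = z := by
  by_cases hpoint : ∃ a, w ⬝ᵥ a + β = 0
  · obtain ⟨a, ha⟩ := hpoint
    let f : Module.Dual K (Fin (n + 1) → K) := dotProductEquiv K (Fin (n + 1)) w
    have hf : f ≠ 0 := (dotProductEquiv K _).map_ne_zero_iff.2 hw
    have finrank_ker : Module.finrank K (Fin n → K) = Module.finrank K (LinearMap.ker f) := by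
      have h := Module.Dual.finrank_ker_add_one_of_ne_zero hf
      simp only [Module.finrank_fin_fun] at h ⊢
      lia
    let e : (Fin n → K) ≃ₗ[K] LinearMap.ker f := LinearEquiv.ofFinrankEq _ _ finrank_ker
    refine ⟨((LinearMap.ker f).subtype ∘ₗ e.toLinearMap).toMatrix', a, fun z hz => ?_⟩
    have hza : z - a ∈ LinearMap.ker f := by
      simp only [f, LinearMap.mem_ker, dotProductEquiv_apply_apply, dotProduct_sub]
      linear_combination hz - ha
    exact ⟨e.symm ⟨z - a, hza⟩, by simp⟩
  · exact ⟨0, 0, fun z hz => (hpoint ⟨z, hz⟩).elim⟩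

theorem exists_layer_on_hyperplane (W : Matrix (Fin m) (Fin (n + 1)) ℝ) (b : Fin m → ℝ)
    {w : Fin (n + 1) → ℝ} (hw : w ≠ 0) (β : ℝ) :
    ∃ (W' : Matrix (Fin m) (Fin n) ℝ) (b' : Fin m → ℝ), ∀ z, w ⬝ᵥ z + β = 0 →
      layerPattern W b z ∈ activationPatterns W' b' := by
  obtain ⟨A, a, hA⟩ := exists_parametrization_of_hyperplane hw β
  refine ⟨W * A, W.mulVec a + b, fun z hz => ?_⟩
  obtain ⟨y, rfl⟩ := hA z hz
  exact mem_activationPatterns.2 ⟨y, (layerPattern_mulVec_add W b A a y).symm⟩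

theorem layerPattern_eq_cons_iff {W : Matrix (Fin (m + 1)) (Fin n) ℝ} {b : Fin (m + 1) → ℝ}
    {x : Fin n → ℝ} {c : Bool} {t : Fin m → Bool} :
    layerPattern W b x = Fin.cons c t ↔
      decide (0 < W 0 ⬝ᵥ x + b 0) = c ∧
        layerPattern (W.submatrix Fin.succ id) (Fin.tail b) x = t := by
  rw [← Fin.cons_self_tail (layerPattern W b x), Fin.cons_inj]
  rfl

theorem exists_layer_achieving_inter_consFiber (W : Matrix (Fin (m + 1)) (Fin (n + 1)) ℝ)
    (b : Fin (m + 1) → ℝ) :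
    ∃ (W' : Matrix (Fin m) (Fin n) ℝ) (b' : Fin m → ℝ), ∀ t,
      Fin.cons true t ∈ activationPatterns W b → Fin.cons false t ∈ activationPatterns W b →
        t ∈ activationPatterns W' b' := by
  simp only [mem_activationPatterns (W := W), layerPattern_eq_cons_iff, decide_eq_true_eq,
    decide_eq_false_iff_not, not_lt]
  by_cases hW : W 0 = 0
  · refine ⟨0, 0, fun t => ?_⟩
    rintro ⟨x, hx, -⟩ ⟨y, hy, -⟩
    simp only [hW, zero_dotProduct] at hx hy
    exact absurd hx hy.not_gt
  · obtain ⟨W', b', hW'⟩ :=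
      exists_layer_on_hyperplane (W.submatrix Fin.succ id) (Fin.tail b) hW (b 0)
    refine ⟨W', b', fun t => ?_⟩
    rintro ⟨x, hx, hxt⟩ ⟨y, hy, hyt⟩
    obtain ⟨z, rfl, hz⟩ := exists_preactivation_eq_zero hyt hxt hy hx.le
    exact hW' z hz

theorem exists_actHist_histLE_add_dm (W : Matrix (Fin (m + 1)) (Fin (n + 1)) ℝ)
    (b : Fin (m + 1) → ℝ) :
    ∃ (W' : Matrix (Fin m) (Fin n) ℝ) (b' : Fin m → ℝ),
      HistLE (actHist W b)
        (actHist W' b' + dm (actHist (W.submatrix Fin.succ id) (Fin.tail b))) := by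
  obtain ⟨W', b', hW'⟩ := exists_layer_achieving_inter_consFiber W b
  refine ⟨W', b', fun J => ?_⟩
  simp only [tailSum_add, tailSum_dm, tailSum_actHist]
  refine card_filter_le_bweight_le hW' (fun c t ht => ?_) J
  obtain ⟨x, hx⟩ := mem_activationPatterns.1 ht
  exact mem_activationPatterns.2 ⟨x, (layerPattern_eq_cons_iff.1 hx).2⟩

end Layers

section Recursion

variable {m : ℕ} {γ : ℕ → ℕ →₀ ℕ}

theorem actHist_histLE_min
    (hγ : ∀ n ≤ m, ∀ (W : Matrix (Fin m) (Fin n) ℝ) (b : Fin m → ℝ), HistLE (actHist W b) (γ n))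
    {n : ℕ} (W : Matrix (Fin m) (Fin n) ℝ) (b : Fin m → ℝ) :
    HistLE (actHist W b) (γ (min n m)) := by
  rcases le_total n m with hn | hn
  · rw [min_eq_left hn]
    exact hγ n hn W b
  · rw [min_eq_right hn]
    exact (actHist_histLE_of_patterns_subset (activationPatterns_subset_one W b)).trans
      (hγ m le_rfl 1 b)

theorem actHist_histLE_add_dm
    (hγ : ∀ n ≤ m, ∀ (W : Matrix (Fin m) (Fin n) ℝ) (b : Fin m → ℝ), HistLE (actHist W b) (γ n))
    {n : ℕ} (hn : n ≤ m) (W : Matrix (Fin (m + 1)) (Fin (n + 1)) ℝ) (b : Fin (m + 1) → ℝ) :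
    HistLE (actHist W b) (γ n + dm (γ (min (n + 1) m))) := by
  obtain ⟨W', b', h⟩ := exists_actHist_histLE_add_dm W b
  exact h.trans ((hγ n hn W' b').add (actHist_histLE_min hγ _ _).dm)

theorem statement2_general
    (hbound : ∀ n ≤ m, ∀ (W : Matrix (Fin m) (Fin n) ℝ) (b : Fin m → ℝ),
      HistLE (actHist W b) (γ n))
    (hmono : ∀ n ntil : ℕ, n ≤ ntil → ntil ≤ m → HistLE (γ n) (γ ntil))
    {γN : ℕ → ℕ →₀ ℕ} (hγN0 : γN 0 = Finsupp.single 0 1)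
    (hγNrec : ∀ n : ℕ, 1 ≤ n → n ≤ m + 1 → γN n = γ (n - 1) + dm (γ (min n m))) :
    (∀ n : ℕ, 1 ≤ n → n ≤ m + 1 →
      ∀ (W : Matrix (Fin (m + 1)) (Fin n) ℝ) (b : Fin (m + 1) → ℝ),
        HistLE (actHist W b) (γN n)) ∧
    (∀ n ntil : ℕ, n ≤ ntil → ntil ≤ m + 1 → HistLE (γN n) (γN ntil)) := by
  have bound_succ (n : ℕ) (hn : n ≤ m) (W : Matrix (Fin (m + 1)) (Fin (n + 1)) ℝ)
      (b : Fin (m + 1) → ℝ) : HistLE (actHist W b) (γN (n + 1)) := by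
    rw [hγNrec (n + 1) (by lia) (by lia)]
    exact actHist_histLE_add_dm hbound hn W b
  refine ⟨fun n hn hnm => ?_, fun n ntil hle hntil => ?_⟩
  · obtain ⟨n, rfl⟩ := Nat.exists_eq_add_of_le' hn
    exact bound_succ n (by lia)
  · rcases n with _ | n <;> rcases ntil with _ | ntil
    · exact .refl _
    · rw [hγN0]
      exact (single_zero_one_histLE_actHist 0 0).trans (bound_succ ntil (by lia) 0 0)
    · lia
    · rw [hγNrec (n + 1) (by lia) (by lia), hγNrec (ntil + 1) (by lia) hntil]
      exact (hmono _ _ (by lia) (by lia)).add (hmono _ _ (by lia) (by lia)).dm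

end Recursion

/-- Theorem 1, recursion step: if `γ_{·,n''}` satisfies the bound condition
for all `1 ≤ n'' < N'`, then the column defined by `γ_{0,N'} = e^0` and
`γ_{n,N'} = γ_{n-1,N'-1} + dm(γ_{min(n,N'-1),N'-1})` also satisfies the bound condition. -/
theorem statement2 (N' : ℕ) (hN' : 2 ≤ N')
    (γ : ℕ → ℕ → (ℕ →₀ ℕ))
    (hconv : ∀ n'' : ℕ, 1 ≤ n'' → n'' < N' → ∀ n : ℕ, n'' < n → γ n n'' = γ n'' n'')
    (hbcA : ∀ n'' : ℕ, 1 ≤ n'' → n'' < N' → ∀ n : ℕ, n ≤ n'' →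
      ∀ (W : Matrix (Fin n'') (Fin n) ℝ) (b : Fin n'' → ℝ),
        HistLE (actHist W b) (γ n n''))
    (hbcB : ∀ n'' : ℕ, 1 ≤ n'' → n'' < N' → ∀ n ntil : ℕ, n ≤ ntil → ntil ≤ n'' →
      HistLE (γ n n'') (γ ntil n''))
    (γN : ℕ → (ℕ →₀ ℕ))
    (hγN0 : γN 0 = Finsupp.single 0 1)
    (hγNrec : ∀ n : ℕ, 1 ≤ n → n ≤ N' →
      γN n = γ (n - 1) (N' - 1) + dm (γ (min n (N' - 1)) (N' - 1))) :
    (∀ n : ℕ, 1 ≤ n → n ≤ N' →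
      ∀ (W : Matrix (Fin N') (Fin n) ℝ) (b : Fin N' → ℝ),
        HistLE (actHist W b) (γN n)) ∧
    (∀ n ntil : ℕ, n ≤ ntil → ntil ≤ N' → HistLE (γN n) (γN ntil)) := by
  obtain ⟨m, rfl⟩ := Nat.exists_eq_add_of_le' (Nat.one_le_of_lt hN')
  exact statement2_general (hbcA m (by lia) (by lia)) (hbcB m (by lia) (by lia)) hγN0 hγNrec
end
end

section
/- Consider a ReLU network with scalar input (n_0 = 1), first layer given by w¹, b¹ ∈ ℝ^{n_1} with all w¹_j ≠ 0 and the breakpoints −b¹_j/w¹_j pairwise distinct, first-layer pattern s_1(x) ∈ {0,1}^{n_1} (s_1(x)_j = 1 iff w¹_j x + b¹_j > 0), and skip-augmented first-layer output g(x) = (σ(w¹ x + b¹), x) ∈ ℝ^{n_1+1}. For a second layer W² ∈ ℝ^{n_2×(n_1+1)}, b² ∈ ℝ^{n_2}, let s_2(x) ∈ {0,1}^{n_2} be defined by s_2(x)_j = 1 iff (W² g(x) + b²)_j > 0. Then the maximum over all (W², b²) of the number of achievable joint patterns #{(s_1(x), s_2(x)) : x ∈ ℝ} equals (n_1+1)(n_2+1):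 this count is at most (n_1+1)(n_2+1) for every (W², b²), and there exist W², b² attaining it. -/
open scoped Classical

noncomputable section

/-!
Upper bound: along the line each affine neuron switches at most once, so after flipping some
coordinates the set of active neurons grows with `x`; the patterns then form a chain of subsets,
of which there are at most one more than neurons. On a first-layer region the second layer is
affine in `x`, so the same bound applies there.

Lower bound: the functions computed by second-layer neurons form a vector space containing the
constants, the identity and all hinges at the breakpoints, hence a continuous zigzag whose values
sweep `(-r, r)` on each of the `n₁ + 1` regions. Second-layer neurons computing this zigzag minus
`n₂` different thresholds show `n₂ + 1` patterns on each region. These joint patterns are told apart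
by two counts: the number of breakpoints to the left of `x` (read off the first layer by comparing
each activation with the sign of its weight) and the number of thresholds exceeded.
-/

section MonotoneCounting

variable {α ι : Type*} [LinearOrder α] [Fintype ι]

lemma ncard_range_le_of_monotone {U : α → Finset ι} (hU : Monotone U) :
    (Set.range U).ncard ≤ Fintype.card ι + 1 := by
  have card_injOn : Set.InjOn Finset.card (Set.range U) := by
    rintro _ ⟨x, rfl⟩ _ ⟨y, rfl⟩ hcard
    rcases le_total x y with hxy | hyx
    · exact Finset.eq_of_subset_of_card_le (hU hxy) hcard.ge
    · exact (Finset.eq_of_subset_of_card_le (hU hyx) hcard.le).symm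
  calc (Set.range U).ncard
      ≤ (Finset.range (Fintype.card ι + 1) : Set ℕ).ncard :=
        Set.ncard_le_ncard_of_injOn Finset.card
          (fun S _ => by simpa [Nat.lt_succ_iff] using S.card_le_univ) card_injOn
    _ = Fintype.card ι + 1 := by rw [Set.ncard_coe_finset, Finset.card_range]

lemma ncard_range_decide_le {P : ι → α → Prop} (hP : ∀ j, Monotone (P j) ∨ Antitone (P j)) :
    (Set.range fun x j => decide (P j x)).ncard ≤ Fintype.card ι + 1 := by
  let U : α → Finset ι := fun x => {j | P j x ↔ Monotone (P j)}
  have hU : Monotone U := by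
    intro x y hxy j hj
    simp only [U, Finset.mem_filter, Finset.mem_univ, true_and] at hj ⊢
    by_cases hmono : Monotone (P j)
    · exact iff_of_true (hmono hxy (hj.2 hmono)) hmono
    · exact iff_of_false (fun hy => hmono (hj.1 ((hP j).resolve_left hmono hxy hy))) hmono
  have pattern_eq : (fun x j => decide (P j x)) =
      (fun (S : Finset ι) j => decide (j ∈ S ↔ Monotone (P j))) ∘ U := by
    funext x j
    simp only [U, Function.comp_apply, Finset.mem_filter, Finset.mem_univ, true_and,
      decide_eq_decide]
    tauto
  rw [pattern_eq, Set.range_comp]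
  exact (Set.ncard_image_le (Set.toFinite _)).trans (ncard_range_le_of_monotone hU)

end MonotoneCounting

/-- The activation pattern of a layer with pre-activation vector `z`. -/
def activationPattern {ι : Type*} (z : ι → ℝ) : ι → Bool := fun j => decide (0 < z j)

lemma ncard_range_activationPattern_affine_le {ι : Type*} [Fintype ι] (a c : ι → ℝ) :
    (Set.range fun x : ℝ => activationPattern (x • a + c)).ncard ≤ Fintype.card ι + 1 := by
  refine ncard_range_decide_le fun j => ?_
  simp only [Pi.add_apply, Pi.smul_apply, smul_eq_mul]
  rcases le_total 0 (a j) with ha | ha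
  · refine Or.inl fun x y hxy hx => hx.trans_le ?_
    gcongr
  · refine Or.inr fun x y hxy hy => hy.trans_le ?_
    linarith [mul_le_mul_of_nonpos_right hxy ha]

lemma ncard_range_prodMk_le {α β γ : Type*} [Finite β] [Finite γ] {f : α → β} {g : α → γ}
    {m n : ℕ} (hf : (Set.range f).ncard ≤ m) (hg : ∀ y, (g '' (f ⁻¹' {y})).ncard ≤ n) :
    (Set.range fun x => (f x, g x)).ncard ≤ m * n := by
  let s := (Set.range fun x => (f x, g x)).toFinite.toFinset
  have image_fst : (s.image Prod.fst : Set β) = Set.range f := by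
    simp only [s, Finset.coe_image, Set.Finite.coe_toFinset, ← Set.range_comp, Function.comp_def]
  have fiber_subset (y : β) :
      ({z ∈ s | z.1 = y} : Set (β × γ)) ⊆ Prod.mk y '' (g '' (f ⁻¹' {y})) := by
    rintro z ⟨hz, rfl⟩
    obtain ⟨x, rfl⟩ := (Set.Finite.mem_toFinset _).1 hz
    exact ⟨g x, ⟨x, rfl, rfl⟩, rfl⟩
  have fiber_card (y : β) : ({z ∈ s | z.1 = y} : Finset (β × γ)).card ≤ n := by
    rw [← Set.ncard_coe_finset, Finset.coe_filter]
    exact (Set.ncard_le_ncard (fiber_subset y) (Set.toFinite _)).trans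
      ((Set.ncard_image_le (Set.toFinite _)).trans (hg y))
  calc (Set.range fun x => (f x, g x)).ncard
      = s.card := Set.ncard_eq_toFinset_card _
    _ ≤ n * (s.image Prod.fst).card := s.card_le_mul_card_image n fun y _ => fiber_card y
    _ = n * (Set.range f).ncard := by rw [← image_fst, Set.ncard_coe_finset]
    _ ≤ m * n := by rw [mul_comm]; gcongr

section TwoLayers

variable {n : ℕ} (w b : Fin n → ℝ)

/-- The skip-augmented first-layer output `g(x) = (σ(w x + b), x)`. -/
def skipOutput (x : ℝ) : Fin (n + 1) → ℝ := Fin.snoc (fun i => max (w i * x + b i) 0) x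

/-- The joint activation pattern `(s₁(x), s₂(x))` of the network whose second layer has weights `W`
and biases `c`. -/
def jointPattern {κ : Type*} (W : Matrix κ (Fin (n + 1)) ℝ) (c : κ → ℝ) (x : ℝ) :
    (Fin n → Bool) × (κ → Bool) :=
  (activationPattern fun j => w j * x + b j, activationPattern (W.mulVec (skipOutput w b x) + c))

lemma exists_skipOutput_eq_smul_add_of_activationPattern_eq (p : Fin n → Bool) :
    ∃ d e : Fin (n + 1) → ℝ, ∀ x, activationPattern (fun j => w j * x + b j) = p →
      skipOutput w b x = x • d + e := by
  refine ⟨Fin.snoc (fun i => if p i then w i else 0) 1,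
    Fin.snoc (fun i => if p i then b i else 0) 0, fun x hx => ?_⟩
  subst hx
  funext i
  refine Fin.lastCases ?_ (fun i => ?_) i
  · simp [skipOutput]
  · by_cases hi : 0 < w i * x + b i
    · simp [skipOutput, activationPattern, hi, hi.le, mul_comm x]
    · simp [skipOutput, activationPattern, hi, not_lt.1 hi]

lemma ncard_range_jointPattern_le {κ : Type*} [Fintype κ] (W : Matrix κ (Fin (n + 1)) ℝ)
    (c : κ → ℝ) :
    (Set.range (jointPattern w b W c)).ncard ≤ (n + 1) * (Fintype.card κ + 1) := by
  refine ncard_range_prodMk_le ?_ fun p => ?_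
  · simpa [mul_comm, Pi.add_def] using ncard_range_activationPattern_affine_le w b
  · obtain ⟨d, e, hde⟩ := exists_skipOutput_eq_smul_add_of_activationPattern_eq w b p
    refine (Set.ncard_le_ncard ?_ (Set.toFinite _)).trans
      (ncard_range_activationPattern_affine_le (W.mulVec d) (W.mulVec e + c))
    rintro _ ⟨x, hx, rfl⟩
    refine ⟨x, ?_⟩
    simp only [hde x hx, Matrix.mulVec_add, Matrix.mulVec_smul, add_assoc]

/-- The functions of the input that a single second-layer neuron can compute before activation:
constants plus linear combinations of the coordinates of `skipOutput`. -/
def preactivations : Submodule ℝ (ℝ → ℝ) :=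
  Submodule.span ℝ (insert 1 (Set.range fun i x => skipOutput w b x i))

variable {w b}

lemma exists_eq_dotProduct_skipOutput_add {f : ℝ → ℝ} (hf : f ∈ preactivations w b) :
    ∃ (v : Fin (n + 1) → ℝ) (c : ℝ), ∀ x, f x = v ⬝ᵥ skipOutput w b x + c := by
  obtain ⟨c, g, hg, rfl⟩ := Submodule.mem_span_insert.1 hf
  obtain ⟨v, rfl⟩ := (Submodule.mem_span_range_iff_exists_fun ℝ).1 hg
  exact ⟨v, c, fun x => by simp [dotProduct, add_comm]⟩

lemma one_mem_preactivations : 1 ∈ preactivations w b :=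
  Submodule.subset_span (Set.mem_insert _ _)

lemma skipOutput_apply_mem_preactivations (i : Fin (n + 1)) :
    (fun x => skipOutput w b x i) ∈ preactivations w b :=
  Submodule.subset_span (Set.mem_insert_of_mem _ ⟨i, rfl⟩)

lemma id_mem_preactivations : id ∈ preactivations w b := by
  convert skipOutput_apply_mem_preactivations (w := w) (b := b) (Fin.last n) using 1
  funext x
  simp [skipOutput]

lemma relu_mem_preactivations (i : Fin n) :
    (fun x => max (w i * x + b i) 0) ∈ preactivations w b := by
  simpa [skipOutput] using skipOutput_apply_mem_preactivations (w := w) (b := b) i.castSucc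

end TwoLayers

/-- The unit-slope hinge `x ↦ σ(x - t)` with breakpoint `t`. -/
def hinge (t x : ℝ) : ℝ := max (x - t) 0

lemma continuous_hinge (t : ℝ) : Continuous (hinge t) := by
  unfold hinge
  fun_prop

lemma hinge_neg_div_eq {w : ℝ} (hw : w ≠ 0) (b x : ℝ) :
    hinge (-b / w) x =
      |w|⁻¹ * max (w * x + b) 0 + (1 - w / |w|) / 2 * x + (1 - w / |w|) / 2 * (b / w) := by
  have relu_eq (z : ℝ) : max z 0 = (z + |z|) / 2 := by
    rcases le_total 0 z with hz | hz
    · rw [max_eq_left hz, abs_of_nonneg hz]; ring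
    · rw [max_eq_right hz, abs_of_nonpos hz]; ring
  have factor : w * x + b = w * (x - -b / w) := by field_simp; ring
  rw [hinge, factor, relu_eq, relu_eq, abs_mul]
  have habs : |w| ≠ 0 := abs_ne_zero.2 hw
  field_simp
  ring

lemma hinge_mem_preactivations {n : ℕ} {w b : Fin n → ℝ} {i : Fin n} (hw : w i ≠ 0) :
    hinge (-b i / w i) ∈ preactivations w b := by
  have combination := add_mem (add_mem
    (Submodule.smul_mem _ |w i|⁻¹ (relu_mem_preactivations (w := w) (b := b) i))
    (Submodule.smul_mem _ ((1 - w i / |w i|) / 2) id_mem_preactivations))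
    (Submodule.smul_mem _ ((1 - w i / |w i|) / 2 * (b i / w i)) one_mem_preactivations)
  convert combination using 1
  funext x
  simpa using hinge_neg_div_eq hw (b i) x

section LowerBound

open scoped Finset

lemma exists_add_smul_hinge_eq_neg (f : ℝ → ℝ) {t u : ℝ} (htu : t < u) :
    ∃ k : ℝ, (f + k • hinge t) u = -f t ∧ ∀ x ≤ t, (f + k • hinge t) x = f x := by
  have hne : u - t ≠ 0 := (sub_pos.2 htu).ne'
  refine ⟨(-f t - f u) / (u - t), ?_, fun x hx => ?_⟩
  · simp [hinge, htu.le, hne]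
  · simp [hinge, hx]

lemma Ioo_subset_image_Ioo_of_eq_neg {g : ℝ → ℝ} (hg : Continuous g) {t u r : ℝ} (htu : t ≤ u)
    (ht : |g t| = r) (hu : g u = -g t) : Set.Ioo (-r) r ⊆ g '' Set.Ioo t u := by
  rcases eq_or_eq_neg_of_abs_eq ht with ht | ht
  · simpa only [hu, ht] using intermediate_value_Ioo' htu hg.continuousOn
  · simpa only [hu, ht, neg_neg] using intermediate_value_Ioo htu hg.continuousOn

-- The condition `|f u| = r` carries the induction: the next segment, starting at the breakpoint
-- `u`, is tilted so as to end at the opposite value, and so sweeps `(-r, r)` again.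
lemma exists_zigzag {V : Submodule ℝ (ℝ → ℝ)} (one_mem : 1 ∈ V) (id_mem : id ∈ V) {r : ℝ}
    (hr : 0 ≤ r) (T : Finset ℝ) (hinge_mem : ∀ t ∈ T, hinge t ∈ V) {u : ℝ} (hu : ∀ t ∈ T, t < u) :
    ∃ f ∈ V, Continuous f ∧ |f u| = r ∧ ∀ k ≤ #T, ∀ v ∈ Set.Ioo (-r) r,
      ∃ y < u, y ∉ T ∧ #{t ∈ T | t < y} = k ∧ f y = v := by
  induction T using Finset.induction_on_max generalizing u with
  | empty =>
    refine ⟨id + (r - u) • 1, add_mem id_mem (V.smul_mem _ one_mem), by fun_prop, ?_, ?_⟩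
    · simp [abs_of_nonneg hr]
    · rintro k hk v ⟨-, hv⟩
      exact ⟨v - (r - u), by linarith, by simp, by simpa [eq_comm] using hk, by simp⟩
  | insert t T ht_max ih =>
    have ht : t ∉ T := fun h => (ht_max t h).false
    have htu : t < u := hu t (Finset.mem_insert_self t T)
    obtain ⟨f, hfV, hf_cont, hf_abs, hf_sweep⟩ :=
      ih (fun s hs => hinge_mem s (Finset.mem_insert_of_mem hs)) ht_max
    obtain ⟨k, hg_u, hg_left⟩ := exists_add_smul_hinge_eq_neg f htu
    have hg_cont : Continuous (f + k • hinge t) := hf_cont.add ((continuous_hinge t).const_smul k)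
    have hg_t := hg_left t le_rfl
    refine ⟨f + k • hinge t,
      add_mem hfV (V.smul_mem k (hinge_mem t (Finset.mem_insert_self t T))), hg_cont,
      by rw [hg_u, abs_neg, hf_abs], fun m hm v hv => ?_⟩
    rw [Finset.card_insert_of_notMem ht] at hm
    rcases hm.lt_or_eq with hm | rfl
    · obtain ⟨y, hyt, hyT, hy_card, rfl⟩ := hf_sweep m (Nat.lt_succ_iff.1 hm) v hv
      refine ⟨y, hyt.trans htu, by simp [hyt.ne, hyT], ?_, hg_left y hyt.le⟩
      rwa [Finset.filter_insert, if_neg hyt.not_gt]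
    · obtain ⟨y, ⟨hty, hyu⟩, rfl⟩ := Ioo_subset_image_Ioo_of_eq_neg hg_cont htu.le
        (by rw [hg_t, hf_abs]) (by rw [hg_u, hg_t]) hv
      have lt_y : ∀ s ∈ insert t T, s < y :=
        (Finset.forall_mem_insert _ _ _).2 ⟨hty, fun s hs => (ht_max s hs).trans hty⟩
      refine ⟨y, hyu, fun hy => (lt_y y hy).false, ?_, rfl⟩
      rw [Finset.filter_true_of_mem lt_y, Finset.card_insert_of_notMem ht]

lemma decide_pos_eq_decide_pos_slope_iff {w b x : ℝ} (hw : w ≠ 0) (hx : x ≠ -b / w) :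
    decide (0 < w * x + b) = decide (0 < w) ↔ -b / w < x := by
  rw [decide_eq_decide]
  rcases hw.lt_or_gt with hneg | hpos
  · rw [iff_false_right hneg.not_gt, not_lt, ← hx.symm.le_iff_lt, div_le_iff_of_neg hneg]
    constructor <;> intro h <;> linarith
  · rw [iff_true_right hpos, div_lt_iff₀ hpos]
    constructor <;> intro h <;> linarith

variable {n : ℕ} {w b : Fin n → ℝ}

lemma card_activationPattern_eq_decide_pos_slope (hw : ∀ j, w j ≠ 0)
    (hdist : Function.Injective fun j => -b j / w j) {x : ℝ}
    (hx : x ∉ Finset.univ.image fun j => -b j / w j) :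
    #{j | activationPattern (fun j => w j * x + b j) j = decide (0 < w j)} =
      #{t ∈ Finset.univ.image fun j => -b j / w j | t < x} := by
  rw [Finset.filter_image, Finset.card_image_of_injective _ hdist]
  congr 1
  refine Finset.filter_congr fun j _ => decide_pos_eq_decide_pos_slope_iff (hw j) ?_
  rintro rfl
  exact hx (Finset.mem_image_of_mem _ (Finset.mem_univ j))

lemma card_activationPattern_thresholds {m l : ℕ} (hl : l ≤ m) :
    #{j | activationPattern (fun j : Fin m => (l : ℝ) - 1 / 2 - (j : ℕ)) j} = l := by
  have active_iff (j : Fin m) : 0 < (l : ℝ) - 1 / 2 - (j : ℕ) ↔ (j : ℕ) < l := by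
    constructor <;> intro h
    · exact Nat.cast_lt.1 (by linarith : ((j : ℕ) : ℝ) < l)
    · have : ((j : ℕ) : ℝ) + 1 ≤ l := by exact_mod_cast h
      linarith
  simp only [activationPattern, decide_eq_true_eq, active_iff, Fin.card_filter_val_lt]
  exact min_eq_right hl

lemma exists_jointPattern_activation_counts (hw : ∀ j, w j ≠ 0)
    (hdist : Function.Injective fun j => -b j / w j) (m : ℕ) :
    ∃ (W : Matrix (Fin m) (Fin (n + 1)) ℝ) (c : Fin m → ℝ), ∀ k ≤ n, ∀ l ≤ m, ∃ x,
      #{j | (jointPattern w b W c x).1 j = decide (0 < w j)} = k ∧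
      #{j | (jointPattern w b W c x).2 j} = l := by
  let T : Finset ℝ := Finset.univ.image fun j => -b j / w j
  have hT : #T = n := by
    rw [Finset.card_image_of_injective _ hdist, Finset.card_univ, Fintype.card_fin]
  have hinge_mem : ∀ t ∈ T, hinge t ∈ preactivations w b :=
    Finset.forall_mem_image.2 fun i _ => hinge_mem_preactivations (hw i)
  obtain ⟨u, hu⟩ := T.exists_le
  obtain ⟨f, hf, -, -, sweep⟩ := exists_zigzag one_mem_preactivations id_mem_preactivations
    (r := m + 1) (by positivity) T hinge_mem
    (u := u + 1) fun t ht => (hu t ht).trans_lt (lt_add_one u)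
  obtain ⟨v, c, hfv⟩ := exists_eq_dotProduct_skipOutput_add hf
  refine ⟨Matrix.of fun _ => v, fun j => c - (j : ℕ), fun k hk l hl => ?_⟩
  have hlm : (l : ℝ) ≤ m := Nat.cast_le.2 hl
  obtain ⟨x, -, hxT, hx_card, hfx⟩ :=
    sweep k (hT ▸ hk) (l - 1 / 2) ⟨by linarith [l.cast_nonneg (α := ℝ)], by linarith⟩
  refine ⟨x, (card_activationPattern_eq_decide_pos_slope hw hdist hxT).trans hx_card, ?_⟩
  have preactivation_eq :
      (Matrix.of fun _ => v).mulVec (skipOutput w b x) + (fun j : Fin m => c - (j : ℕ)) =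
        fun j : Fin m => (l : ℝ) - 1 / 2 - (j : ℕ) := by
    funext j
    rw [← hfx, hfv x, add_sub_assoc]
    rfl
  simp only [jointPattern, preactivation_eq]
  exact card_activationPattern_thresholds hl

lemma exists_le_ncard_range_jointPattern (hw : ∀ j, w j ≠ 0)
    (hdist : Function.Injective fun j => -b j / w j) (m : ℕ) :
    ∃ (W : Matrix (Fin m) (Fin (n + 1)) ℝ) (c : Fin m → ℝ),
      (n + 1) * (m + 1) ≤ (Set.range (jointPattern w b W c)).ncard := by
  obtain ⟨W, c, hcounts⟩ := exists_jointPattern_activation_counts hw hdist m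
  let counts : (Fin n → Bool) × (Fin m → Bool) → ℕ × ℕ := fun p =>
    (#{j | p.1 j = decide (0 < w j)}, #{j | p.2 j})
  let grid : Finset (ℕ × ℕ) := Finset.range (n + 1) ×ˢ Finset.range (m + 1)
  have grid_subset : (grid : Set (ℕ × ℕ)) ⊆ counts '' Set.range (jointPattern w b W c) := by
    rintro ⟨k, l⟩ hkl
    obtain ⟨hk, hl⟩ := Finset.mem_product.1 (Finset.mem_coe.1 hkl)
    obtain ⟨x, hxk, hxl⟩ := hcounts k (Finset.mem_range_succ_iff.1 hk) l
      (Finset.mem_range_succ_iff.1 hl)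
    exact ⟨_, ⟨x, rfl⟩, Prod.ext hxk hxl⟩
  refine ⟨W, c, ?_⟩
  calc (n + 1) * (m + 1)
      = (grid : Set (ℕ × ℕ)).ncard := by
        rw [Set.ncard_coe_finset, Finset.card_product, Finset.card_range, Finset.card_range]
    _ ≤ (counts '' Set.range (jointPattern w b W c)).ncard :=
        Set.ncard_le_ncard grid_subset (Set.toFinite _)
    _ ≤ (Set.range (jointPattern w b W c)).ncard := Set.ncard_image_le (Set.toFinite _)

end LowerBound

/-- Proposition 9: for a scalar-input ReLU network with a skip-augmented
first layer `g(x) = (σ(w¹x + b¹), x)`, the maximal number of achievable joint activation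
patterns over choices of the second layer equals `(n₁+1)(n₂+1)`. -/
theorem statement15 (n1 n2 : ℕ) (w1 b1 : Fin n1 → ℝ)
    (hw : ∀ j, w1 j ≠ 0)
    (hdist : Function.Injective (fun j => -(b1 j) / w1 j)) :
    (∀ (W2 : Matrix (Fin n2) (Fin (n1 + 1)) ℝ) (b2 : Fin n2 → ℝ),
      {t : (Fin n1 → Bool) × (Fin n2 → Bool) | ∃ x : ℝ,
          ((fun j => decide (0 < w1 j * x + b1 j)),
           (fun j => decide (0 <
              W2.mulVec (Fin.snoc (fun i => max (w1 i * x + b1 i) 0) x) j + b2 j))) =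
            t}.ncard ≤ (n1 + 1) * (n2 + 1)) ∧
    (∃ (W2 : Matrix (Fin n2) (Fin (n1 + 1)) ℝ) (b2 : Fin n2 → ℝ),
      {t : (Fin n1 → Bool) × (Fin n2 → Bool) | ∃ x : ℝ,
          ((fun j => decide (0 < w1 j * x + b1 j)),
           (fun j => decide (0 <
              W2.mulVec (Fin.snoc (fun i => max (w1 i * x + b1 i) 0) x) j + b2 j))) =
            t}.ncard = (n1 + 1) * (n2 + 1)) := by
  have upper (W2 : Matrix (Fin n2) (Fin (n1 + 1)) ℝ) (b2 : Fin n2 → ℝ) :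
      (Set.range (jointPattern w1 b1 W2 b2)).ncard ≤ (n1 + 1) * (n2 + 1) := by
    simpa only [Fintype.card_fin] using ncard_range_jointPattern_le w1 b1 W2 b2
  obtain ⟨W2, b2, lower⟩ := exists_le_ncard_range_jointPattern hw hdist n2
  exact ⟨upper, W2, b2, (upper W2 b2).antisymm lower⟩
end
end
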